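/- Let A ∈ ℝ^{n×n} be symmetric with 0 ⪯ A ⪯ I and let W ∈ ℝ^{P×P} be an orthogonal matrix. Then for all U, Ũ ∈ ℝ^{n×P}, ‖ |(I − A)U W| − |(I − A)Ũ W| ‖² ≤ ‖U − Ũ‖² − ‖A(U − Ũ)‖². -/

import Mathlib

/-!
Put `D = U - V`. Entrywise, `||x| - |y|| ≤ |x - y|`, so the left-hand side is at most
`‖(I - A) D W‖²`, which equals `‖(I - A) D‖²` because `W` is orthogonal. What remains is
`‖D‖² - ‖A D‖² - ‖(I - A) D‖² = 2 Tr(Dᵀ A (I - A) D) ≥ 0`, which follows from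
`A (I - A) = A (I - A) A + (I - A) A (I - A)`: with `A` symmetric, both summands are congruences
of positive semidefinite matrices.
-/

open Matrix

/-- Squared Frobenius norm of a real matrix: `‖X‖² = Tr(XᵀX) = ∑ i j, X i j ^ 2`. -/
def frobSq {n P : ℕ} (X : Matrix (Fin n) (Fin P) ℝ) : ℝ := ∑ i, ∑ j, (X i j) ^ 2

theorem frobSq_eq_trace {n P : ℕ} (X : Matrix (Fin n) (Fin P) ℝ) :
    frobSq X = (Xᵀ * X).trace := by
  simp only [frobSq, trace, diag_apply, mul_apply, transpose_apply, pow_two]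
  exact Finset.sum_comm

theorem frobSq_mul_orthogonal {n P : ℕ} (X : Matrix (Fin n) (Fin P) ℝ)
    (W : Matrix (Fin P) (Fin P) ℝ) (hW : Wᵀ * W = 1) : frobSq (X * W) = frobSq X := by
  rw [frobSq_eq_trace, frobSq_eq_trace, transpose_mul, Matrix.mul_assoc, trace_mul_comm,
    Matrix.mul_assoc, Matrix.mul_assoc, mul_eq_one_comm.mp hW, Matrix.mul_one]

theorem frobSq_abs_sub_abs_le {n P : ℕ} (X Y : Matrix (Fin n) (Fin P) ℝ) :
    frobSq (X.map (|·|) - Y.map (|·|)) ≤ frobSq (X - Y) := by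
  refine Finset.sum_le_sum fun i _ => Finset.sum_le_sum fun j _ => ?_
  exact sq_le_sq.mpr (abs_abs_sub_abs_le _ _)

theorem trace_congr_nonneg {n P : ℕ} {M : Matrix (Fin n) (Fin n) ℝ} (hM : M.PosSemidef)
    (X : Matrix (Fin n) (Fin P) ℝ) : 0 ≤ (Xᵀ * M * X).trace := by
  have h := (hM.conjTranspose_mul_mul_same X).trace_nonneg
  rwa [conjTranspose_eq_transpose_of_trivial] at h

/-- The contraction estimate without the absolute values and the orthogonal factor. -/
theorem frobSq_one_sub_mul_add_le {n P : ℕ} (A : Matrix (Fin n) (Fin n) ℝ)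
    (hA_symm : A.IsSymm) (hA_psd : A.PosSemidef) (hIA_psd : (1 - A).PosSemidef)
    (D : Matrix (Fin n) (Fin P) ℝ) :
    frobSq ((1 - A) * D) + frobSq (A * D) ≤ frobSq D := by
  have h1 := trace_congr_nonneg hIA_psd (A * D)
  have h2 := trace_congr_nonneg hA_psd ((1 - A) * D)
  have hT : Aᵀ = A := hA_symm
  have key : Dᵀ * D = ((1 - A) * D)ᵀ * ((1 - A) * D) + (A * D)ᵀ * (A * D)
      + (2 : ℝ) • ((A * D)ᵀ * (1 - A) * (A * D) + ((1 - A) * D)ᵀ * A * ((1 - A) * D)) := by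
    simp only [transpose_mul, transpose_sub, transpose_one, hT, two_smul]
    simp only [Matrix.mul_sub, Matrix.sub_mul, Matrix.one_mul, Matrix.mul_one, Matrix.mul_assoc]
    abel
  have h3 := congrArg trace key
  simp only [trace_add, trace_smul, smul_eq_mul] at h3
  simp only [frobSq_eq_trace]
  linarith

/-- Let `A ∈ ℝ^{n×n}` be symmetric with `0 ⪯ A ⪯ I` and `W ∈ ℝ^{P×P}`
orthogonal. Then for all `U, V ∈ ℝ^{n×P}`,
`‖ |(I − A)U W| − |(I − A)V W| ‖² ≤ ‖U − V‖² − ‖A(U − V)‖²` (Frobenius norms, entrywise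
absolute values). -/
theorem igt_one_step_contraction {n P : ℕ} (A : Matrix (Fin n) (Fin n) ℝ)
    (hA_symm : A.IsSymm) (hA_psd : A.PosSemidef) (hIA_psd : (1 - A).PosSemidef)
    (W : Matrix (Fin P) (Fin P) ℝ) (hW : Wᵀ * W = 1)
    (U V : Matrix (Fin n) (Fin P) ℝ) :
    frobSq (((1 - A) * U * W).map (|·|) - ((1 - A) * V * W).map (|·|)) ≤
      frobSq (U - V) - frobSq (A * (U - V)) := by
  have h1 := frobSq_abs_sub_abs_le ((1 - A) * U * W) ((1 - A) * V * W)
  rw [← Matrix.sub_mul, ← Matrix.mul_sub, frobSq_mul_orthogonal _ W hW] at h1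
  have h2 := frobSq_one_sub_mul_add_le A hA_symm hA_psd hIA_psd (U - V)
  linarith
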